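/- arXiv:1307.2850 — 2 statements merged into one kernel-verified Lean document; each statement's English description precedes it below -/
import Mathlib

section
/- For every natural number n ≥ 1, r(ℤ_2^n) = (2^n + 1)(2^{n-1} + 1) / 3; equivalently, 3 · r(ℤ_2^n) = (2^n + 1)(2^{n-1} + 1). -/
/-!
Write `V = (ℤ/2)^n`. The class of a pair `(a, b)` is determined by the multiset `{a, b, a + b}`,
since the generating moves realise all six permutations of this triple; hence classes correspond
to three-element multisets of `V` with sum zero. Translating every element of such a multiset by
`v` changes its sum by `3v = v`, so `(v, [a, b]) ↦ {a + v, b + v, a + b + v}` is a bijection from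
`V × Quot (pairRel V)` onto all three-element multisets of `V` (`translatedTriple_bijective`).
Therefore `2^n * r = choose (2^n + 2) 3`, and dividing by `2^n` gives the formula.
-/

/-- The relation on `G × G` whose generated equivalence relation identifies
`(g,k) ~ (k,-g)` and `(g,k) ~ (g, k + m • g)` for all integers `m`. -/
def pairRel (G : Type*) [AddCommGroup G] : G × G → G × G → Prop :=
  fun x y => y = (x.2, -x.1) ∨ ∃ m : ℤ, y = (x.1, x.2 + m • x.1)

/-- `r G` is the number of equivalence classes of `G × G` under the equivalence
relation generated by `pairRel G`. -/
noncomputable def numClasses (G : Type*) [AddCommGroup G] : ℕ :=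
  Nat.card (Quot (pairRel G))

section ElementaryTwoGroup

variable {V : Type*} [AddCommGroup V]

/-- The multiset `{a + v, b + v, a + b + v}` attached to `v` and `(a, b)`. -/
def tripleMultiset (v : V) (p : V × V) : Multiset V :=
  {p.1 + v, p.2 + v, p.1 + p.2 + v}

lemma tripleMultiset_rel (h2 : ∀ x : V, x + x = 0) (v : V) {p q : V × V} (h : pairRel V p q) :
    tripleMultiset v p = tripleMultiset v q := by
  have hneg : ∀ x : V, -x = x := fun x => neg_eq_of_add_eq_zero_left (h2 x)
  obtain ⟨a, b⟩ := p
  rcases h with rfl | ⟨m, rfl⟩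
  · simp only [tripleMultiset, hneg, add_comm b a, Multiset.insert_eq_cons]
    exact Multiset.cons_swap _ _ _
  · -- only the parity of `m` matters
    rcases Int.even_or_odd' m with ⟨k, rfl | rfl⟩
    · have : (2 * k) • a = 0 := by rw [mul_comm, mul_smul, two_smul, h2, smul_zero]
      simp [this]
    · have : (2 * k + 1) • a = a := by
        rw [add_smul, mul_comm, mul_smul, two_smul, h2, smul_zero, one_smul, zero_add]
      have hb : a + (a + b) = b := by rw [← add_assoc, h2, zero_add]
      simp only [tripleMultiset, this, hb, add_comm b a, Multiset.insert_eq_cons]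
      congr 1
      exact Multiset.pair_comm _ _

lemma tripleMultiset_sum (h2 : ∀ x : V, x + x = 0) (v : V) (p : V × V) :
    (tripleMultiset v p).sum = v := by
  obtain ⟨a, b⟩ := p
  have : (tripleMultiset v (a, b)).sum = (a + a) + (b + b) + (v + v) + v := by
    simp only [tripleMultiset, Multiset.insert_eq_cons, Multiset.sum_cons, Multiset.sum_singleton]
    abel
  simp [this, h2]

lemma mk_swap (h2 : ∀ x : V, x + x = 0) (a b : V) :
    Quot.mk (pairRel V) (a, b) = Quot.mk (pairRel V) (b, a) := by
  apply Quot.sound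
  left
  simp [neg_eq_of_add_eq_zero_left (h2 a)]

lemma mk_add (a b : V) :
    Quot.mk (pairRel V) (a, b) = Quot.mk (pairRel V) (a, a + b) :=
  Quot.sound (Or.inr ⟨1, by simp [add_comm]⟩)

/-- Two pairs with the same first entry and the same triple are equivalent. -/
lemma mk_eq_of_fst {v a b d : V}
    (h : tripleMultiset v (a, b) = tripleMultiset v (a, d)) :
    Quot.mk (pairRel V) (a, b) = Quot.mk (pairRel V) (a, d) := by
  simp only [tripleMultiset, Multiset.insert_eq_cons, Multiset.cons_inj_right] at h
  have hd : d + v ∈ ({b + v, a + b + v} : Multiset V) := by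
    rw [Multiset.insert_eq_cons, h]; simp
  simp only [Multiset.insert_eq_cons, Multiset.mem_cons, Multiset.mem_singleton,
    add_left_inj] at hd
  rcases hd with rfl | rfl
  · rfl
  · exact mk_add a b

lemma mk_eq_of_triple (h2 : ∀ x : V, x + x = 0) {v a b c d : V}
    (h : tripleMultiset v (a, b) = tripleMultiset v (c, d)) :
    Quot.mk (pairRel V) (a, b) = Quot.mk (pairRel V) (c, d) := by
  have hc : c + v ∈ tripleMultiset v (a, b) := by rw [h]; simp [tripleMultiset]
  simp only [tripleMultiset, Multiset.insert_eq_cons, Multiset.mem_cons, Multiset.mem_singleton,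
    add_left_inj] at hc
  -- Replace `(a, b)` by an equivalent pair whose first entry is `c`.
  obtain ⟨e, he⟩ : ∃ e, Quot.mk (pairRel V) (a, b) = Quot.mk (pairRel V) (c, e) := by
    rcases hc with rfl | rfl | rfl
    · exact ⟨b, rfl⟩
    · exact ⟨a, mk_swap h2 _ _⟩
    · exact ⟨a, (mk_add a b).trans (mk_swap h2 _ _)⟩
  have hT : tripleMultiset v (a, b) = tripleMultiset v (c, e) :=
    congrArg (Quot.lift (tripleMultiset v) fun _ _ => tripleMultiset_rel h2 v) he
  exact he.trans (mk_eq_of_fst (hT.symm.trans h))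

/-- The map `(v, [a, b]) ↦ {a + v, b + v, a + b + v}` into three-element multisets. -/
def translatedTriple (h2 : ∀ x : V, x + x = 0) (x : V × Quot (pairRel V)) : Sym V 3 :=
  Quot.lift (fun p => (⟨tripleMultiset x.1 p, by simp [tripleMultiset]⟩ : Sym V 3))
    (fun _ _ h => Subtype.ext (tripleMultiset_rel h2 x.1 h)) x.2

lemma translatedTriple_bijective (h2 : ∀ x : V, x + x = 0) :
    Function.Bijective (translatedTriple h2) := by
  constructor
  · rintro ⟨v, ⟨a, b⟩⟩ ⟨w, ⟨c, d⟩⟩ h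
    have h' : tripleMultiset v (a, b) = tripleMultiset w (c, d) := congrArg Subtype.val h
    obtain rfl : v = w := by
      rw [← tripleMultiset_sum h2 v (a, b), h', tripleMultiset_sum h2]
    exact Prod.ext rfl (mk_eq_of_triple h2 h')
  · rintro ⟨s, hs⟩
    obtain ⟨x, y, z, rfl⟩ := Multiset.card_eq_three.mp hs
    -- The translation vector must be the sum `x + y + z`.
    refine ⟨(x + y + z, Quot.mk _ (y + z, x + z)), Subtype.ext ?_⟩
    change tripleMultiset (x + y + z) (y + z, x + z) = {x, y, z}
    have e1 : y + z + (x + y + z) = x := by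
      rw [show y + z + (x + y + z) = x + (y + y) + (z + z) by abel, h2, h2]; simp
    have e2 : x + z + (x + y + z) = y := by
      rw [show x + z + (x + y + z) = y + (x + x) + (z + z) by abel, h2, h2]; simp
    have e3 : y + z + (x + z) + (x + y + z) = z := by
      rw [show y + z + (x + z) + (x + y + z) = z + (x + x) + (y + y) + (z + z) by abel,
        h2, h2, h2]; simp
    simp only [tripleMultiset, e1, e2, e3]

end ElementaryTwoGroup

theorem numClasses_zmod_two_pow (n : ℕ) (hn : 1 ≤ n) :
    3 * numClasses (Fin n → ZMod 2) = (2 ^ n + 1) * (2 ^ (n - 1) + 1) := by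
  have h2 : ∀ x : Fin n → ZMod 2, x + x = 0 := fun x => funext fun i => CharTwo.add_self_eq_zero _
  have hcard := Nat.card_congr (Equiv.ofBijective _ (translatedTriple_bijective h2))
  rw [Nat.card_prod, Nat.card_eq_fintype_card (α := Sym _ _), Sym.card_sym_eq_choose,
    Nat.card_eq_fintype_card (α := Fin n → ZMod 2)] at hcard
  have hV : Fintype.card (Fin n → ZMod 2) = 2 ^ n := by simp
  rw [hV] at hcard
  change 2 ^ n * numClasses (Fin n → ZMod 2) = _ at hcard
  obtain ⟨m, rfl⟩ : ∃ m, n = m + 1 := ⟨n - 1, by omega⟩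
  generalize numClasses (Fin (m + 1) → ZMod 2) = r at hcard ⊢
  have hd := Nat.descFactorial_eq_factorial_mul_choose (2 ^ (m + 1) + 2) 3
  rw [show 2 ^ (m + 1) + 3 - 1 = 2 ^ (m + 1) + 2 by omega] at hcard
  rw [← hcard] at hd
  simp only [Nat.descFactorial_succ, Nat.descFactorial_zero, Nat.factorial,
    Nat.add_sub_cancel, Nat.sub_zero, mul_one] at hd
  rw [show 2 ^ (m + 1) + 2 - 1 = 2 ^ (m + 1) + 1 by omega] at hd
  have hpos : 0 < 2 ^ (m + 1) * 2 := by positivity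
  apply Nat.eq_of_mul_eq_mul_left hpos
  simp only [Nat.add_sub_cancel]
  rw [pow_succ] at hd ⊢
  linarith
end

section
/- For every prime number p, r(ℤ_p) = 2; that is, the quotient of ℤ_p × ℤ_p by the equivalence relation generated by (g,k) ~ (k,-g) and (g,k) ~ (g, k + m·g) has exactly two classes, namely the class of (0,0) and the class of all nonzero pairs. -/
/-- If `g ≠ 0` then `g` generates `ZMod p`, so the second coordinate can be changed at will. -/
lemma mk_eq_mk_of_fst_ne_zero {p : ℕ} [Fact p.Prime] {g : ZMod p} (hg : g ≠ 0) (k l : ZMod p) :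
    Quot.mk (pairRel (ZMod p)) (g, k) = Quot.mk (pairRel (ZMod p)) (g, l) := by
  obtain ⟨m, hm⟩ := ZMod.intCast_surjective ((l - k) / g)
  refine Quot.sound (Or.inr ⟨m, ?_⟩)
  rw [zsmul_eq_mul, hm, div_mul_cancel₀ _ hg, add_sub_cancel]

lemma mk_eq_mk_rotate {G : Type*} [AddCommGroup G] (g k : G) :
    Quot.mk (pairRel G) (g, k) = Quot.mk (pairRel G) (k, -g) :=
  Quot.sound (Or.inl rfl)

/-- Every nonzero pair is equivalent to `(1, 0)`. -/
lemma mk_eq_mk_one_zero {p : ℕ} [Fact p.Prime] {x : ZMod p × ZMod p} (hx : x ≠ (0, 0)) :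
    Quot.mk (pairRel (ZMod p)) x = Quot.mk (pairRel (ZMod p)) (1, 0) := by
  have key : ∀ g k : ZMod p, g ≠ 0 →
      Quot.mk (pairRel (ZMod p)) (g, k) = Quot.mk (pairRel (ZMod p)) (1, 0) := fun g k hg => by
    rw [mk_eq_mk_of_fst_ne_zero hg k 1, mk_eq_mk_rotate, mk_eq_mk_of_fst_ne_zero one_ne_zero _ 0]
  obtain ⟨g, k⟩ := x
  by_cases hg : g = 0
  · subst hg
    have hk : k ≠ 0 := fun h => hx (by rw [h])
    rw [mk_eq_mk_rotate, key _ _ hk]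
  · exact key g k hg

/-- Both generating moves preserve the property of being the zero pair, so its class is
a singleton. -/
lemma mk_ne_mk_zero {G : Type*} [AddCommGroup G] {x : G × G} (hx : x ≠ (0, 0)) :
    Quot.mk (pairRel G) x ≠ Quot.mk (pairRel G) (0, 0) := by
  intro h
  have hinv : ∀ a b : G × G, pairRel G a b → (a = (0, 0)) = (b = (0, 0)) := by
    rintro ⟨g, k⟩ b (rfl | ⟨m, rfl⟩)
    · simp [and_comm]
    · simp +contextual
  have h0 := congrArg (Quot.lift (fun a : G × G => a = (0, 0)) hinv) h
  exact hx (h0.mpr rfl)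

theorem numClasses_zmod_prime (p : ℕ) (hp : p.Prime) :
    numClasses (ZMod p) = 2 ∧
    (∀ x y : ZMod p × ZMod p, x ≠ (0, 0) → y ≠ (0, 0) →
      Quot.mk (pairRel (ZMod p)) x = Quot.mk (pairRel (ZMod p)) y) ∧
    (∀ x : ZMod p × ZMod p, x ≠ (0, 0) →
      Quot.mk (pairRel (ZMod p)) x ≠ Quot.mk (pairRel (ZMod p)) (0, 0)) := by
  haveI : Fact p.Prime := ⟨hp⟩
  refine ⟨?_, fun x y hx hy => (mk_eq_mk_one_zero hx).trans (mk_eq_mk_one_zero hy).symm,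
    fun x hx => mk_ne_mk_zero hx⟩
  refine Nat.card_eq_two_iff.mpr
    ⟨Quot.mk _ (1, 0), Quot.mk _ (0, 0), mk_ne_mk_zero (by simp), ?_⟩
  refine Set.eq_univ_of_forall fun q => ?_
  induction q using Quot.ind with
  | mk x =>
    by_cases hx : x = (0, 0)
    · right
      rw [hx, Set.mem_singleton_iff]
    · exact Or.inl (mk_eq_mk_one_zero hx)
end
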